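/- arXiv:1302.4670 — 5 statements merged into one kernel-verified Lean document; each statement's English description precedes it below -/
import Mathlib

section
/- Let t, r, n, m, λ be natural numbers with 1 ≤ t ≤ r ≤ n, 1 ≤ m ≤ n and λ ≥ 1, and let 𝓑 be an S_λ(t,r,n) block design on Fin n. For a finite multiset 𝓑 of subsets of Fin n define, for each subset A of Fin n, T_𝓑(A) = Σ_{B ∈ 𝓑, |B ∩ A| ≥ t} (|B ∩ A| − t + 1) (the sum taken with multiplicity of blocks), and define T_𝓑 to be the maximum of T_𝓑(A) over all m-element subsets A of Fin n. Let 𝓒 be the complete block design consisting of all r-element subsets of Fin n, and let λ* = C(n−t, r−t). Then λ* · T_𝓑 ≥ λ · T_𝓒. -/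
/-- The quantity `T(A) = ∑_{B ∈ 𝓑, |B ∩ A| ≥ t} (|B ∩ A| − t + 1)`, summed with
multiplicity of blocks. -/
def designT {n : ℕ} (t : ℕ) (𝓑 : Multiset (Finset (Fin n))) (A : Finset (Fin n)) : ℕ :=
  ((𝓑.filter (fun B => t ≤ (B ∩ A).card)).map (fun B => (B ∩ A).card - t + 1)).sum

/-- The maximum of `T(A)` over all `m`-element subsets `A` of `Fin n`. -/
def designTmax {n : ℕ} (t m : ℕ) (𝓑 : Multiset (Finset (Fin n))) : ℕ :=
  (Finset.univ.filter (fun A : Finset (Fin n) => A.card = m)).sup (designT t 𝓑)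

theorem designT_eq_sum_map {n : ℕ} (t : ℕ) (𝓑 : Multiset (Finset (Fin n)))
    (A : Finset (Fin n)) :
    designT t 𝓑 A = (𝓑.map fun B => (B ∩ A).card + 1 - t).sum := by
  unfold designT
  induction 𝓑 using Multiset.induction_on with
  | empty => simp
  | cons B 𝓑 ih =>
    by_cases h : t ≤ (B ∩ A).card
    · rw [Multiset.filter_cons_of_pos (p := fun B => t ≤ (B ∩ A).card) _ h,
        Multiset.map_cons, Multiset.sum_cons, ih,
        Multiset.map_cons, Multiset.sum_cons]
      omega
    · rw [Multiset.filter_cons_of_neg (p := fun B => t ≤ (B ∩ A).card) _ h, ih,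
        Multiset.map_cons, Multiset.sum_cons]
      omega

theorem exists_perm_map_eq_of_card_eq {α : Type*} [Fintype α] [DecidableEq α]
    {X Y : Finset α} (h : X.card = Y.card) :
    ∃ σ : Equiv.Perm α, X.map σ.toEmbedding = Y := by
  refine ⟨(Finset.equivOfCardEq h).extendSubtype, Finset.eq_of_subset_of_card_le ?_ (by simp [h])⟩
  intro y hy
  obtain ⟨x, hx, rfl⟩ := Finset.mem_map.mp hy
  exact (Finset.equivOfCardEq h).extendSubtype_mem x hx

/-- Sums over all `k`-sets of a function of the intersection size with `X` depend only on the
size of `X`. -/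
theorem sum_powersetCard_inter_congr {α : Type*} [Fintype α] [DecidableEq α]
    (f : ℕ → ℕ) (k : ℕ) {X Y : Finset α} (h : X.card = Y.card) :
    ∑ Z ∈ Finset.univ.powersetCard k, f (Z ∩ X).card =
      ∑ Z ∈ Finset.univ.powersetCard k, f (Z ∩ Y).card := by
  obtain ⟨σ, rfl⟩ := exists_perm_map_eq_of_card_eq h
  refine Finset.sum_equiv σ.finsetCongr (by simp [Finset.mem_powersetCard]) fun Z _ => ?_
  simp only [Equiv.finsetCongr_apply]
  rw [← Finset.map_inter, Finset.card_map]

theorem sum_map_ite_eq_card_filter {α : Type*} (p : α → Prop) [DecidablePred p]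
    (s : Multiset α) :
    (s.map fun a => if p a then 1 else 0).sum = Multiset.card (s.filter p) := by
  induction s using Multiset.induction_on with
  | empty => simp
  | cons a s ih => by_cases h : p a <;> simp [h, ih, add_comm]

/-- Double counting of the pairs of a `t`-set and a block containing it. -/
theorem card_blocks_mul_choose {n t r lam : ℕ} {𝓑 : Multiset (Finset (Fin n))}
    (hBcard : ∀ B ∈ 𝓑, B.card = r)
    (hBdes : ∀ T : Finset (Fin n), T.card = t →
      Multiset.card (𝓑.filter (fun B => T ⊆ B)) = lam) :
    Multiset.card 𝓑 * r.choose t = n.choose t * lam := by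
  have hblock : ∀ B ∈ 𝓑,
      ∑ T ∈ Finset.univ.powersetCard t, (if T ⊆ B then 1 else 0) = r.choose t := by
    intro B hB
    rw [← Finset.card_filter, ← hBcard B hB, ← Finset.card_powersetCard]
    congr 1
    ext T
    simp [Finset.mem_powersetCard, and_comm]
  calc Multiset.card 𝓑 * r.choose t
      = (𝓑.map fun B => ∑ T ∈ Finset.univ.powersetCard t, if T ⊆ B then 1 else 0).sum := by
        rw [Multiset.map_congr rfl hblock]; simp
    _ = ∑ T ∈ Finset.univ.powersetCard t, (𝓑.map fun B => if T ⊆ B then 1 else 0).sum :=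
        Multiset.sum_map_sum_map 𝓑 (Finset.univ.powersetCard t).val
    _ = ∑ T ∈ (Finset.univ : Finset (Fin n)).powersetCard t, lam := by
        refine Finset.sum_congr rfl fun T hT => ?_
        rw [← hBdes T (Finset.mem_powersetCard.mp hT).2]
        exact sum_map_ite_eq_card_filter _ 𝓑
    _ = n.choose t * lam := by simp

theorem sum_designT_powersetCard {n t r m : ℕ} {𝓑 : Multiset (Finset (Fin n))}
    (hBcard : ∀ B ∈ 𝓑, B.card = r) {R : Finset (Fin n)} (hR : R.card = r) :
    ∑ A ∈ Finset.univ.powersetCard m, designT t 𝓑 A =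
      Multiset.card 𝓑 * ∑ A ∈ Finset.univ.powersetCard m, ((A ∩ R).card + 1 - t) := by
  simp only [designT_eq_sum_map]
  calc _ = (𝓑.map fun B => ∑ A ∈ Finset.univ.powersetCard m, ((B ∩ A).card + 1 - t)).sum :=
        (Multiset.sum_map_sum_map 𝓑 (Finset.univ.powersetCard m).val).symm
    _ = (𝓑.map fun _ => ∑ A ∈ Finset.univ.powersetCard m, ((A ∩ R).card + 1 - t)).sum := by
        congr 1
        refine Multiset.map_congr rfl fun B hB => ?_
        simp only [Finset.inter_comm B]
        exact sum_powersetCard_inter_congr (fun x => x + 1 - t) m ((hBcard B hB).trans hR.symm)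
    _ = _ := by simp

theorem designT_le_designTmax {n t m : ℕ} (𝓑 : Multiset (Finset (Fin n)))
    {A : Finset (Fin n)} (hA : A.card = m) : designT t 𝓑 A ≤ designTmax t m 𝓑 :=
  Finset.le_sup (f := designT t 𝓑) (by simp [hA])

theorem designT_complete_congr {n t r : ℕ} {A A' : Finset (Fin n)} (h : A.card = A'.card) :
    designT t (Finset.univ.powersetCard r : Finset (Finset (Fin n))).val A =
      designT t (Finset.univ.powersetCard r : Finset (Finset (Fin n))).val A' := by
  simp only [designT_eq_sum_map]
  exact sum_powersetCard_inter_congr (fun x => x + 1 - t) r h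

theorem choose_mul_designTmax_complete_le {n t r m : ℕ} :
    n.choose m * designTmax t m (Finset.univ.powersetCard r : Finset (Finset (Fin n))).val ≤
      ∑ A ∈ Finset.univ.powersetCard m,
        designT t (Finset.univ.powersetCard r : Finset (Finset (Fin n))).val A := by
  have hcard : ((Finset.univ : Finset (Fin n)).powersetCard m).card = n.choose m := by simp
  rw [← hcard, ← smul_eq_mul]
  refine Finset.card_nsmul_le_sum _ _ _ fun A hA => Finset.sup_le fun A' hA' => ?_
  exact (designT_complete_congr
    ((Finset.mem_filter.mp hA').2.trans (Finset.mem_powersetCard.mp hA).2.symm)).le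

theorem stmt0 (t r n m lam : ℕ) (ht : 1 ≤ t) (htr : t ≤ r) (hrn : r ≤ n)
    (hm1 : 1 ≤ m) (hmn : m ≤ n) (hlam : 1 ≤ lam)
    (𝓑 : Multiset (Finset (Fin n)))
    (hBcard : ∀ B ∈ 𝓑, B.card = r)
    (hBdes : ∀ T : Finset (Fin n), T.card = t →
      Multiset.card (𝓑.filter (fun B => T ⊆ B)) = lam) :
    (n - t).choose (r - t) * designTmax t m 𝓑 ≥
      lam * designTmax t m ((Finset.univ.powersetCard r : Finset (Finset (Fin n))).val) := by
  obtain ⟨R, -, hR⟩ := Finset.exists_subset_card_eq (s := (Finset.univ : Finset (Fin n)))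
    (n := r) (by simpa using hrn)
  set g := ∑ A ∈ Finset.univ.powersetCard m, ((A ∩ R).card + 1 - t)
  have hcount : (n - t).choose (r - t) * Multiset.card 𝓑 = lam * n.choose r := by
    apply Nat.eq_of_mul_eq_mul_right (Nat.choose_pos htr)
    rw [mul_assoc, card_blocks_mul_choose hBcard hBdes, mul_assoc, Nat.choose_mul htr]
    ring
  have hB : Multiset.card 𝓑 * g ≤ n.choose m * designTmax t m 𝓑 := by
    rw [← sum_designT_powersetCard hBcard hR]
    refine (Finset.sum_le_card_nsmul _ _ _ fun A hA =>
      designT_le_designTmax 𝓑 (Finset.mem_powersetCard.mp hA).2).trans_eq (by simp)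
  have hC : n.choose m *
      designTmax t m (Finset.univ.powersetCard r : Finset (Finset (Fin n))).val ≤
        n.choose r * g := by
    refine choose_mul_designTmax_complete_le.trans_eq ?_
    rw [sum_designT_powersetCard (fun B hB => (Finset.mem_powersetCard.mp hB).2) hR]
    simp [g]
  refine Nat.le_of_mul_le_mul_left ?_ (Nat.choose_pos hmn)
  calc n.choose m * (lam * designTmax t m
        (Finset.univ.powersetCard r : Finset (Finset (Fin n))).val)
      = lam * (n.choose m * designTmax t m
        (Finset.univ.powersetCard r : Finset (Finset (Fin n))).val) := by ring
    _ ≤ lam * (n.choose r * g) := Nat.mul_le_mul_left _ hC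
    _ = (n - t).choose (r - t) * (Multiset.card 𝓑 * g) := by
        rw [← mul_assoc, ← hcount, mul_assoc]
    _ ≤ (n - t).choose (r - t) * (n.choose m * designTmax t m 𝓑) := Nat.mul_le_mul_left _ hB
    _ = n.choose m * ((n - t).choose (r - t) * designTmax t m 𝓑) := by ring
end

section
/- Let F be a finite field with q elements, let M ≥ 1 and T ≥ 1 be natural numbers, and let (Q_i)_{i ∈ I} be a finite family of M × (M+T) matrices over F indexed by a finite set I. For a T × M matrix S over F, let G(S) denote the (M+T) × M matrix whose top M rows form the M × M identity matrix and whose bottom T rows form S. Suppose that for each i ∈ I there exists some T × M matrix S over F such that the M × M matrix Q_i · G(S) is invertible. Then the number of T × M matrices S over F for which Q_i · G(S) is singular for at least one i ∈ I is at most |I| · T · M · q^{TM−1}. -/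
/-- The `(M+T) × M` matrix whose top `M` rows form the identity matrix and whose
bottom `T` rows form `S`. -/
def stackIdAbove {F : Type*} [Field F] (M T : ℕ) (S : Matrix (Fin T) (Fin M) F) :
    Matrix (Fin (M + T)) (Fin M) F :=
  Matrix.of fun i j =>
    if h : (i : ℕ) < M then (if (i : ℕ) = (j : ℕ) then 1 else 0)
    else S ⟨(i : ℕ) - M, by have := i.isLt; omega⟩ j

open MvPolynomial in
/-- **Schwartz–Zippel** counting bound over a finite field, for an arbitrary finite type of
variables. -/
theorem card_filter_eval_eq_zero_le {F σ : Type*} [Field F] [Fintype F] [DecidableEq F]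
    [Fintype σ] [DecidableEq σ] [Nonempty σ] {p : MvPolynomial σ F} (hp : p ≠ 0) :
    (Finset.univ.filter fun x : σ → F => eval x p = 0).card ≤
      p.totalDegree * Fintype.card F ^ (Fintype.card σ - 1) := by
  let e := Fintype.equivFin σ
  have hcard : (Finset.univ.filter fun x : σ → F => eval x p = 0).card =
      (Finset.univ.filter fun y : Fin (Fintype.card σ) → F => eval y (rename e p) = 0).card := by
    refine Finset.card_equiv (e.arrowCongr (Equiv.refl F)) fun x => ?_
    simp [eval_rename, Function.comp_def, Equiv.arrowCongr]
  have hne : rename e p ≠ 0 := (rename_injective e e.injective).ne_iff' (map_zero _) |>.mpr hp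
  have hsz := schwartz_zippel_totalDegree hne (Finset.univ : Finset F)
  rw [Fintype.piFinset_univ, ← hcard, Finset.card_univ] at hsz
  have hq : (0 : ℚ≥0) < Fintype.card F := by exact_mod_cast Fintype.card_pos
  have hpow : (Fintype.card F : ℚ≥0) ^ Fintype.card σ =
      Fintype.card F ^ (Fintype.card σ - 1) * Fintype.card F :=
    (pow_sub_one_mul Fintype.card_ne_zero _).symm
  rw [div_le_div_iff₀ (by positivity) hq, hpow, ← mul_assoc, mul_le_mul_iff_left₀ hq] at hsz
  have hdeg : (rename e p).totalDegree ≤ p.totalDegree := totalDegree_rename_le e p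
  calc _ ≤ (rename e p).totalDegree * Fintype.card F ^ (Fintype.card σ - 1) := by
        exact_mod_cast hsz
    _ ≤ _ := Nat.mul_le_mul_right _ hdeg

/-- The determinant of an `n × n` matrix of polynomials of total degree at most `d` has total
degree at most `n * d`. -/
theorem totalDegree_det_le {R σ n : Type*} [CommRing R] [Fintype n] [DecidableEq n] {d : ℕ}
    (A : Matrix n n (MvPolynomial σ R)) (hA : ∀ i j, (A i j).totalDegree ≤ d) :
    A.det.totalDegree ≤ Fintype.card n * d := by
  rw [Matrix.det_apply]
  refine MvPolynomial.totalDegree_finsetSum_le fun τ _ => ?_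
  have hprod : (∏ i, A (τ i) i).totalDegree ≤ Fintype.card n * d :=
    (MvPolynomial.totalDegree_finsetProd _ _).trans
      ((Finset.sum_le_card_nsmul _ _ d fun i _ => hA _ _).trans_eq (by simp))
  rcases Int.units_eq_one_or (Equiv.Perm.sign τ) with h | h <;> simpa [h] using hprod

/-- The identity stacked above a `T × M` matrix of indeterminates. -/
noncomputable def genericStack (F : Type*) [Field F] (M T : ℕ) :
    Matrix (Fin (M + T)) (Fin M) (MvPolynomial (Fin T × Fin M) F) :=
  Matrix.of fun i j =>
    if h : (i : ℕ) < M then (if (i : ℕ) = (j : ℕ) then 1 else 0)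
    else MvPolynomial.X (⟨(i : ℕ) - M, by have := i.isLt; omega⟩, j)

theorem totalDegree_genericStack_le {F : Type*} [Field F] (M T : ℕ) (i : Fin (M + T))
    (j : Fin M) : (genericStack F M T i j).totalDegree ≤ 1 := by
  simp only [genericStack, Matrix.of_apply]
  split_ifs <;> simp

theorem map_eval_genericStack {F : Type*} [Field F] {M T : ℕ} (S : Matrix (Fin T) (Fin M) F) :
    (genericStack F M T).map (MvPolynomial.eval fun x => S x.1 x.2) = stackIdAbove M T S := by
  ext i j
  simp only [genericStack, stackIdAbove, Matrix.map_apply, Matrix.of_apply]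
  split_ifs <;> simp

/-- The determinant of `Q * G(S)` as a polynomial in the entries of `S`. -/
noncomputable def stackDetPoly {F : Type*} [Field F] {M T : ℕ}
    (Q : Matrix (Fin M) (Fin (M + T)) F) : MvPolynomial (Fin T × Fin M) F :=
  (Q.map (MvPolynomial.C (σ := Fin T × Fin M)) * genericStack F M T).det

theorem eval_stackDetPoly {F : Type*} [Field F] {M T : ℕ}
    (Q : Matrix (Fin M) (Fin (M + T)) F) (S : Matrix (Fin T) (Fin M) F) :
    MvPolynomial.eval (fun x => S x.1 x.2) (stackDetPoly Q) = (Q * stackIdAbove M T S).det := by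
  rw [stackDetPoly, RingHom.map_det, RingHom.mapMatrix_apply, Matrix.map_mul,
    map_eval_genericStack]
  congr 2
  ext i j
  simp

theorem totalDegree_stackDetPoly_le {F : Type*} [Field F] {M T : ℕ}
    (Q : Matrix (Fin M) (Fin (M + T)) F) : (stackDetPoly Q).totalDegree ≤ M := by
  refine (totalDegree_det_le (d := 1) _ fun i j => ?_).trans_eq (by simp)
  rw [Matrix.mul_apply]
  refine MvPolynomial.totalDegree_finsetSum_le fun k _ =>
    (MvPolynomial.totalDegree_mul _ _).trans ?_
  simpa using totalDegree_genericStack_le M T k j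

theorem card_filter_det_mul_stackIdAbove_eq_zero_le {F : Type*} [Field F] [Fintype F]
    [DecidableEq F] {M T : ℕ} (hM : 1 ≤ M) (hT : 1 ≤ T) (Q : Matrix (Fin M) (Fin (M + T)) F)
    (hex : ∃ S : Matrix (Fin T) (Fin M) F, (Q * stackIdAbove M T S).det ≠ 0) :
    (Finset.univ.filter fun S : Matrix (Fin T) (Fin M) F =>
      (Q * stackIdAbove M T S).det = 0).card ≤ M * Fintype.card F ^ (T * M - 1) := by
  have : Nonempty (Fin T × Fin M) := ⟨(⟨0, hT⟩, ⟨0, hM⟩)⟩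
  obtain ⟨S₀, hS₀⟩ := hex
  have hp : stackDetPoly Q ≠ 0 := fun h => hS₀ (by rw [← eval_stackDetPoly, h, map_zero])
  calc _ = (Finset.univ.filter fun x : Fin T × Fin M → F =>
          MvPolynomial.eval x (stackDetPoly Q) = 0).card := by
        refine Finset.card_equiv (Equiv.curry (Fin T) (Fin M) F).symm fun S => ?_
        simp only [Finset.mem_filter_univ, ← eval_stackDetPoly]
        rfl
    _ ≤ _ := card_filter_eval_eq_zero_le hp
    _ ≤ _ := by
        simpa using Nat.mul_le_mul_right _ (totalDegree_stackDetPoly_le Q)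

theorem stmt1 (F : Type*) [Field F] [Fintype F] [DecidableEq F] (q M T : ℕ)
    (hq : Fintype.card F = q) (hM : 1 ≤ M) (hT : 1 ≤ T)
    (I : Type*) [Fintype I]
    (Q : I → Matrix (Fin M) (Fin (M + T)) F)
    (hex : ∀ i : I, ∃ S : Matrix (Fin T) (Fin M) F, (Q i * stackIdAbove M T S).det ≠ 0) :
    (Finset.univ.filter (fun S : Matrix (Fin T) (Fin M) F =>
        ∃ i : I, (Q i * stackIdAbove M T S).det = 0)).card ≤
      Fintype.card I * T * M * q ^ (T * M - 1) := by
  classical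
  have hunion : (Finset.univ.filter fun S : Matrix (Fin T) (Fin M) F =>
      ∃ i : I, (Q i * stackIdAbove M T S).det = 0) =
      Finset.univ.biUnion fun i : I => Finset.univ.filter fun S : Matrix (Fin T) (Fin M) F =>
        (Q i * stackIdAbove M T S).det = 0 := by
    ext S
    simp
  subst hq
  rw [hunion]
  calc _ ≤ Fintype.card I * (M * Fintype.card F ^ (T * M - 1)) :=
        Finset.card_biUnion_le_card_mul _ _ _ fun i _ =>
          card_filter_det_mul_stackIdAbove_eq_zero_le hM hT (Q i) (hex i)
    _ ≤ Fintype.card I * T * (M * Fintype.card F ^ (T * M - 1)) :=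
        Nat.mul_le_mul_right _ (Nat.le_mul_of_pos_right _ hT)
    _ = _ := (mul_assoc _ _ _).symm
end

section
/- Let F be a field and let r ≥ 2 and N ≥ 1 be natural numbers. Let R be the r × (r−1) matrix over F whose top r−1 rows form the (r−1) × (r−1) identity matrix and whose last row is the all-ones row. For each j ∈ {1,…,N}, let Z_j be a nonempty subset of the row indices {1,…,r}, and let R_j be the matrix obtained from R by replacing each row with index in Z_j by the zero row. Let Q be the (rN) × ((r−1)N) block-diagonal matrix with diagonal blocks R_1, …, R_N. Set M = rN − Σ_{j=1}^N |Z_j| (the total number of rows not zeroed out) and T = (r−1)N − M. Then there exists a T × M matrix S over F such that the matrix Q · G(S) has rank M, where G(S) is the ((r−1)N) × M matrix whose top M rows form the M × M identity matrix and whose bottom T rows form S. -/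
/-- The `a × M` matrix whose top `M` rows form the identity matrix and whose
bottom `a - M` rows form `S` (assuming `M ≤ a`). -/
def idAboveS {F : Type*} [Field F] (a M : ℕ) (S : Matrix (Fin (a - M)) (Fin M) F) :
    Matrix (Fin a) (Fin M) F :=
  Matrix.of fun i j =>
    if h : (i : ℕ) < M then (if (i : ℕ) = (j : ℕ) then 1 else 0)
    else S ⟨(i : ℕ) - M, by have := i.isLt; omega⟩ j

/-- A linear map can be corrected to an injective one by a map factoring through `B`,
as soon as the ranges of `A` and `B` together span a space at least as large as the source. -/
theorem LinearMap.exists_injective_add_comp {K V U W : Type*} [Field K]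
    [AddCommGroup V] [Module K V] [FiniteDimensional K V] [AddCommGroup U] [Module K U]
    [AddCommGroup W] [Module K W] [FiniteDimensional K W]
    (A : V →ₗ[K] W) (B : U →ₗ[K] W) (hAB : A.range ⊔ B.range = ⊤)
    (hd : Module.finrank K V ≤ Module.finrank K W) :
    ∃ S : V →ₗ[K] U, Function.Injective (A + B ∘ₗ S) := by
  obtain ⟨g, hg⟩ := (A.range.mkQ ∘ₗ B).exists_rightInverse_of_surjective (by
    rw [LinearMap.range_comp, (Submodule.map_mkQ_eq_top _ _).2 hAB])
  obtain ⟨P, hP⟩ := A.ker.subtype.exists_leftInverse_of_injective A.ker.ker_subtype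
  have hk : Module.finrank K A.ker ≤ Module.finrank K (W ⧸ A.range) := by
    have h₁ := A.finrank_range_add_finrank_ker
    have h₂ := A.range.finrank_quotient_add_finrank
    omega
  obtain ⟨e, he⟩ := finrank_le_iff_exists_linearMap.1 hk
  refine ⟨g ∘ₗ e ∘ₗ P, (injective_iff_map_eq_zero _).2 fun v hv => ?_⟩
  have hPv : P v = 0 := by
    refine (injective_iff_map_eq_zero e).1 he _ ?_
    have h := congrArg A.range.mkQ hv
    have hA : A.range.mkQ (A v) = 0 := by simp
    have hB := LinearMap.congr_fun hg (e (P v))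
    simp only [LinearMap.add_apply, LinearMap.comp_apply, map_add, map_zero, hA, zero_add,
      LinearMap.id_apply] at h hB
    exact hB.symm.trans h
  have hAv : A v = 0 := by simpa [hPv] using hv
  have h := LinearMap.congr_fun hP ⟨v, hAv⟩
  simp only [LinearMap.comp_apply, Submodule.subtype_apply, hPv, LinearMap.id_apply] at h
  exact (congrArg Subtype.val h).symm

/-- A matrix of rank at least `M` keeps rank `M` after multiplication by a suitable matrix whose
top rows form the identity. -/
theorem exists_rank_mul_idAboveS {F m : Type*} [Field F] [Fintype m] {a M : ℕ}
    (Q : Matrix m (Fin a) F) (hM : M ≤ Q.rank) :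
    ∃ S : Matrix (Fin (a - M)) (Fin M) F, (Q * idAboveS a M S).rank = M := by
  have hMa : M ≤ a := by simpa using hM.trans Q.rank_le_card_width
  let top : (Fin M → F) →ₗ[F] (Fin a → F) := (idAboveS a M 0).mulVecLin
  let bottom : (Fin (a - M) → F) →ₗ[F] (Fin a → F) :=
    LinearMap.pi fun i => if h : (i : ℕ) < M then 0 else
      LinearMap.proj ⟨(i : ℕ) - M, by have := i.isLt; omega⟩
  have htop (v : Fin M → F) (i : Fin a) : top v i = if h : (i : ℕ) < M then v ⟨i, h⟩ else 0 := by
    simp only [top, Matrix.mulVecLin_apply, Matrix.mulVec, dotProduct, idAboveS, Matrix.of_apply]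
    split_ifs with h
    · rw [Finset.sum_eq_single ⟨i, h⟩]
      · simp
      · intro b _ hb
        rw [if_neg fun hib => hb (Fin.ext hib.symm), zero_mul]
      · simp
    · simp
  have hbottom (u : Fin (a - M) → F) (i : Fin a) :
      bottom u i = if h : (i : ℕ) < M then 0 else u ⟨(i : ℕ) - M, by have := i.isLt; omega⟩ := by
    simp only [bottom, LinearMap.pi_apply]
    split_ifs <;> rfl
  let q := Q.mulVecLin.rangeRestrict
  obtain ⟨S, hS⟩ := LinearMap.exists_injective_add_comp (q ∘ₗ top) (q ∘ₗ bottom) (by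
    refine eq_top_iff.2 fun w _ => ?_
    obtain ⟨x, rfl⟩ := Q.mulVecLin.surjective_rangeRestrict w
    refine Submodule.mem_sup.2 ⟨_, ⟨fun i => x (i.castLE hMa), rfl⟩, _,
      ⟨fun i => x ⟨M + i, by omega⟩, rfl⟩, ?_⟩
    simp only [LinearMap.comp_apply, ← map_add, q]
    congr 1
    ext i
    rw [Pi.add_apply, htop, hbottom]
    split_ifs with h
    · simp
    · simp [Nat.add_sub_cancel' (not_lt.1 h)]) (by simpa [Matrix.rank] using hM)
  refine ⟨LinearMap.toMatrix' S, ?_⟩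
  have hG (v : Fin M → F) : (idAboveS a M (LinearMap.toMatrix' S)).mulVec v =
      top v + bottom (S v) := by
    ext i
    rw [Pi.add_apply, hbottom, ← LinearMap.toMatrix'_mulVec S]
    simp only [top, Matrix.mulVecLin_apply, Matrix.mulVec, dotProduct, idAboveS, Matrix.of_apply]
    split_ifs with h <;> simp
  have hinj : Function.Injective (Q * idAboveS a M (LinearMap.toMatrix' S)).mulVecLin := by
    intro v w hvw
    apply hS
    apply Subtype.ext
    simpa [q, hG, ← Matrix.mulVec_mulVec, Matrix.mulVec_add] using hvw
  rw [Matrix.rank, LinearMap.finrank_range_of_inj hinj, Module.finrank_fin_fun]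

/-- If the rows of `A` selected by `p` satisfy no nontrivial linear relation, then their number is
at most the rank of `A`. -/
theorem Matrix.card_subtype_le_rank {F m n : Type*} [Field F] [Fintype m] [Fintype n]
    (A : Matrix m n F) (p : m → Prop) [DecidablePred p]
    (h : ∀ y : m → F, (∀ i, ¬ p i → y i = 0) → Matrix.vecMul y A = 0 → y = 0) :
    Fintype.card {i // p i} ≤ A.rank := by
  have hli : LinearIndependent F (A.submatrix (Subtype.val : {i // p i} → m) id).row := by
    refine Fintype.linearIndependent_iff.2 fun g hg i => ?_
    have h0 := h (fun i => if hi : p i then g ⟨i, hi⟩ else 0) (fun i hi => dif_neg hi) (by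
      ext c
      have hc := congrFun hg c
      simp only [Finset.sum_apply, Pi.smul_apply, Matrix.row, Matrix.submatrix_apply, id,
        smul_eq_mul, Pi.zero_apply] at hc
      simp only [Matrix.vecMul, dotProduct, Pi.zero_apply, dite_mul, zero_mul]
      rw [← Fintype.sum_subtype_add_sum_subtype p,
        Finset.sum_eq_zero (s := (Finset.univ : Finset {i // ¬ p i})) fun i _ => dif_neg i.2,
        add_zero, ← hc]
      exact Finset.sum_congr rfl fun i _ => dif_pos i.2)
    simpa [i.2] using congrFun h0 i
  rw [← hli.rank_matrix]
  exact A.rank_submatrix_le _ _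

/-- The number of pairs (block, row) outside the sets `Z j`, with pairs encoded by `Fin (r * N)`. -/
theorem card_notMem_div_mod {r N : ℕ} (hr : 0 < r) (Z : Fin N → Finset (Fin r)) :
    Fintype.card {i : Fin (r * N) // (⟨i % r, Nat.mod_lt _ hr⟩ : Fin r) ∉
      Z ⟨i / r, Nat.div_lt_of_lt_mul i.isLt⟩} = r * N - ∑ j, (Z j).card := by
  have e : {i : Fin (r * N) // (⟨i % r, Nat.mod_lt _ hr⟩ : Fin r) ∈
      Z ⟨i / r, Nat.div_lt_of_lt_mul i.isLt⟩} ≃ Σ j, {x // x ∈ Z j} :=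
    ((finProdFinEquiv.trans (finCongr (Nat.mul_comm N r))).symm.subtypeEquiv
      (q := fun x => x.2 ∈ Z x.1) (fun i => Iff.rfl)).trans
      { toFun := fun x => ⟨x.1.1, x.1.2, x.2⟩
        invFun := fun x => ⟨(x.1, x.2.1), x.2.2⟩
        left_inv := fun _ => rfl
        right_inv := fun _ => rfl }
  rw [Fintype.card_subtype_compl, Fintype.card_fin, Fintype.card_congr e]
  simp

theorem stmt2 (F : Type*) [Field F] (r N : ℕ) (hr : 2 ≤ r) (hN : 1 ≤ N)
    (Z : Fin N → Finset (Fin r)) (hZ : ∀ j, (Z j).Nonempty) :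
    -- the template matrix `R` : identity on top, all-ones last row
    let R : Matrix (Fin r) (Fin (r - 1)) F := Matrix.of fun i j =>
      if (i : ℕ) < r - 1 then (if (i : ℕ) = (j : ℕ) then 1 else 0) else 1
    -- `R j` with the rows indexed by `Z j` zeroed out
    let Rz : Fin N → Matrix (Fin r) (Fin (r - 1)) F := fun k =>
      Matrix.of fun i j => if i ∈ Z k then 0 else R i j
    -- the `(rN) × ((r-1)N)` block-diagonal matrix with blocks `Rz 1, …, Rz N`
    let Q : Matrix (Fin (r * N)) (Fin ((r - 1) * N)) F := Matrix.of fun i j =>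
      if (i : ℕ) / r = (j : ℕ) / (r - 1) then
        Rz ⟨(i : ℕ) / r, by
              have := i.isLt
              exact (Nat.div_lt_iff_lt_mul (by omega)).mpr (Nat.lt_of_lt_of_eq this (Nat.mul_comm r N))⟩
           ⟨(i : ℕ) % r, Nat.mod_lt _ (by omega)⟩
           ⟨(j : ℕ) % (r - 1), Nat.mod_lt _ (by omega)⟩
      else 0
    -- the number of rows of `Q` that are not zeroed out
    let M : ℕ := r * N - ∑ j : Fin N, (Z j).card
    ∃ S : Matrix (Fin ((r - 1) * N - M)) (Fin M) F,
      (Q * idAboveS ((r - 1) * N) M S).rank = M := by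
  intro R Rz Q M
  apply exists_rank_mul_idAboveS
  have hr0 : 0 < r := by omega
  rw [show M = _ from (card_notMem_div_mod hr0 Z).symm]
  apply Matrix.card_subtype_le_rank
  intro y hy hyQ
  simp only [not_not] at hy
  -- the row of `Q` with index `x` in block `k`
  let row (k : Fin N) (x : Fin r) : Fin (r * N) :=
    finCongr (Nat.mul_comm N r) (finProdFinEquiv (k, x))
  have hdiv (k : Fin N) (x : Fin r) : (row k x : ℕ) / r = k := by
    simp [row, finProdFinEquiv, Nat.add_mul_div_left, hr0]
  have hmod (k : Fin N) (x : Fin r) : (row k x : ℕ) % r = x := by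
    simp [row, finProdFinEquiv, Nat.mod_eq_of_lt]
  have hrow (i : Fin (r * N)) : ∃ k x, row k x = i :=
    ⟨_, _, ((finProdFinEquiv.trans (finCongr (Nat.mul_comm N r))).apply_symm_apply i)⟩
  have hzero (k : Fin N) (x : Fin r) (hx : x ∈ Z k) : y (row k x) = 0 := by
    apply hy
    simpa only [hdiv, hmod] using hx
  let last : Fin r := ⟨r - 1, by omega⟩
  have hsum (k : Fin N) (x : Fin r) (hx : (x : ℕ) < r - 1) :
      y (row k x) + y (row k last) = 0 := by
    have hxl : x ≠ last := fun h => by simp [h, last] at hx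
    have hcol : (r - 1) * (k : ℕ) + x < (r - 1) * N := by
      nlinarith [k.isLt, Nat.mul_le_mul_left (r - 1) (Nat.succ_le_of_lt k.isLt)]
    have hcdiv : ((r - 1) * (k : ℕ) + x) / (r - 1) = k := by
      rw [Nat.mul_add_div (by omega), Nat.div_eq_of_lt hx, add_zero]
    have hcmod : ((r - 1) * (k : ℕ) + x) % (r - 1) = x := by
      rw [Nat.mul_add_mod, Nat.mod_eq_of_lt hx]
    have hterm (k' : Fin N) (x' : Fin r) :
        y (row k' x') * Q (row k' x') ⟨_, hcol⟩ =
          if k' = k ∧ (x' = x ∨ x' = last) then y (row k' x') else 0 := by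
      by_cases hz : x' ∈ Z k'
      · simp [hzero k' x' hz]
      · have hl : x' = last ↔ ¬ (x' : ℕ) < r - 1 := by
          simp only [last, Fin.ext_iff]; omega
        simp only [Q, Rz, R, Matrix.of_apply, hdiv, hmod, hcdiv, hcmod, hz, if_false, hl,
          Fin.ext_iff]
        split_ifs <;> simp_all
    have h := congrFun hyQ ⟨_, hcol⟩
    simp only [Matrix.vecMul, dotProduct, Pi.zero_apply] at h
    rw [← h, Finset.sum_eq_add (row k x) (row k last)]
    · simp [hterm]
    · intro h
      have := congrArg (fun i : Fin (r * N) => (i : ℕ) % r) h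
      simp only [hmod] at this
      exact hxl (Fin.ext this)
    · rintro c - ⟨h₁, h₂⟩
      obtain ⟨k', x', rfl⟩ := hrow c
      rw [hterm, if_neg]
      rintro ⟨rfl, rfl | rfl⟩ <;> contradiction
    · simp
    · simp
  have hlast (k : Fin N) : y (row k last) = 0 := by
    obtain ⟨z, hz⟩ := hZ k
    by_cases h : (z : ℕ) < r - 1
    · simpa [hzero k z hz] using hsum k z h
    · rw [show last = z from Fin.ext (by simp only [last]; omega)]
      exact hzero k z hz
  ext i
  obtain ⟨k, x, rfl⟩ := hrow i
  by_cases h : (x : ℕ) < r - 1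
  · simpa [hlast k] using hsum k x h
  · rw [show x = last from Fin.ext (by simp only [last]; omega)]
    exact hlast k
end

section
/- Let n, k, d be natural numbers with 1 ≤ k ≤ d ≤ n−1, and let ᾱ ≥ 0 and M̄ be real numbers satisfying M̄ ≤ Σ_{i=0}^{k−1} min(ᾱ, d−i) and M̄ ≥ (d − k + 1/2)·k. Then n·ᾱ − M̄ ≥ M̄²/(2k²) − 3/8. -/
/-- Truncating the staircase `c + 1, …, c + k` at height `c + v` loses at least `v (v - 1) / 2`
compared with the constant staircase of height `c + v`. -/
theorem sum_min_staircase_le (c : ℝ) (k : ℕ) (v : ℝ) (hv : 0 ≤ v) (hvk : v ≤ k) :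
    ∑ i ∈ Finset.range k, min (c + v) (c + (k : ℝ) - (i : ℝ))
      ≤ k * (c + v) - v * (v - 1) / 2 := by
  induction k generalizing v with
  | zero =>
    have : v = 0 := le_antisymm (by simpa using hvk) hv
    simp [this]
  | succ k ih =>
    rw [Finset.sum_range_succ']
    push_cast at hvk ⊢
    have hfirst : min (c + v) (c + ((k : ℝ) + 1) - 0) ≤ c + v := min_le_left _ _
    rcases le_total v k with h | h
    · have hrest : ∑ i ∈ Finset.range k, min (c + v) (c + ((k : ℝ) + 1) - ((i : ℝ) + 1))
          ≤ k * (c + v) - v * (v - 1) / 2 := by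
        convert ih v hv h using 3
        ring
      linarith
    · have hrest : ∑ i ∈ Finset.range k, min (c + v) (c + ((k : ℝ) + 1) - ((i : ℝ) + 1))
          ≤ k * (c + k) - k * ((k : ℝ) - 1) / 2 := by
        refine le_trans (Finset.sum_le_sum fun i _ => ?_) (ih k (Nat.cast_nonneg k) le_rfl)
        have hi : (0 : ℝ) ≤ i := Nat.cast_nonneg i
        refine le_min ((min_le_right _ _).trans (by linarith)) ((min_le_right _ _).trans ?_)
        linarith
      nlinarith [mul_nonneg (sub_nonneg.2 h) (sub_nonneg.2 hvk)]

theorem stmt6 (n k d : ℕ) (hk : 1 ≤ k) (hkd : k ≤ d) (hdn : d ≤ n - 1) (α M : ℝ)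
    (hα : 0 ≤ α)
    (h1 : M ≤ ∑ i ∈ Finset.range k, min α ((d : ℝ) - (i : ℝ)))
    (h2 : M ≥ ((d : ℝ) - (k : ℝ) + 1 / 2) * (k : ℝ)) :
    (n : ℝ) * α - M ≥ M ^ 2 / (2 * (k : ℝ) ^ 2) - 3 / 8 := by
  have hkpos : (0 : ℝ) < k := by exact_mod_cast hk
  have hkd' : (k : ℝ) ≤ d := by exact_mod_cast hkd
  have hn : (d : ℝ) + 1 ≤ n := by exact_mod_cast (by omega : d + 1 ≤ n)
  obtain ⟨c, hc⟩ : ∃ c : ℝ, c = d - k := ⟨_, rfl⟩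
  have hc0 : 0 ≤ c := by linarith
  -- Storage beyond `d` does not help, so truncate `α` at `d`.
  obtain ⟨a, ha⟩ : ∃ a : ℝ, a = min α d := ⟨_, rfl⟩
  have haα : a ≤ α := ha ▸ min_le_left _ _
  have had : a ≤ d := ha ▸ min_le_right _ _
  have hM : M ≤ ∑ i ∈ Finset.range k, min a ((d : ℝ) - (i : ℝ)) := by
    refine h1.trans (Finset.sum_le_sum fun i _ => ?_)
    have hi : (0 : ℝ) ≤ i := Nat.cast_nonneg i
    rw [ha]
    exact le_min (le_min (min_le_left _ _) ((min_le_right _ _).trans (by linarith)))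
      (min_le_right _ _)
  have hMa : M ≤ k * a := by
    refine hM.trans ((Finset.sum_le_sum fun i _ => min_le_left a _).trans ?_)
    simp
  obtain ⟨x, hx⟩ : ∃ x : ℝ, x = M / k := ⟨_, rfl⟩
  have hMx : M = k * x := by rw [hx]; field_simp
  have hxa : x ≤ a := by
    rw [hx, div_le_iff₀ hkpos]; linarith
  have hcx : c + 1 / 2 ≤ x := by
    rw [hx, le_div_iff₀ hkpos, hc]; exact h2
  have hMv : M ≤ k * a - (a - c) * (a - c - 1) / 2 := by
    have h := sum_min_staircase_le c k (a - c) (by linarith) (by linarith)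
    have hd : c + (k : ℝ) = d := by linarith
    rw [hd, add_sub_cancel] at h
    exact hM.trans h
  have hsq : M ^ 2 / (2 * (k : ℝ) ^ 2) = x ^ 2 / 2 := by
    rw [hMx]; field_simp
  have hx2 : x ^ 2 ≤ a ^ 2 := pow_le_pow_left₀ (by linarith) hxa 2
  have hna : (c + k + 1) * a ≤ n * α :=
    mul_le_mul (by linarith) haα (by linarith) (Nat.cast_nonneg n)
  rw [hsq]
  nlinarith [sq_nonneg c]
end

section
/- Let n, k, d, r be natural numbers with k ≤ d ≤ n−1 and n−d+1 ≤ r ≤ n, and set t = n−d+1. Then Σ_{i=t}^{min(n−k, r)} (i − t + 1) · C(n−k, i) · C(k, r−i) ≤ (d−k) · C(n, r). -/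
theorem stmt9 (n k d r : ℕ) (hkd : k ≤ d) (hdn : d ≤ n - 1)
    (hr1 : n - d + 1 ≤ r) (hrn : r ≤ n) :
    ∑ i ∈ Finset.Icc (n - d + 1) (min (n - k) r),
        (i - (n - d + 1) + 1) * (n - k).choose i * k.choose (r - i) ≤
      (d - k) * n.choose r := by
  have vandermonde : n.choose r =
      ∑ i ∈ Finset.range (r + 1), (n - k).choose i * k.choose (r - i) := by
    conv_lhs => rw [show n = n - k + k by omega]
    rw [Nat.add_choose_eq, Finset.Nat.sum_antidiagonal_eq_sum_range_succ
      (fun i j => (n - k).choose i * k.choose j)]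
  rw [vandermonde, Finset.mul_sum]
  calc
    _ ≤ ∑ i ∈ Finset.Icc (n - d + 1) (min (n - k) r),
          (d - k) * ((n - k).choose i * k.choose (r - i)) := by
      refine Finset.sum_le_sum fun i hi => ?_
      rw [Finset.mem_Icc] at hi
      rw [mul_assoc]
      exact Nat.mul_le_mul_right _ (by omega)
    _ ≤ _ := by
      refine Finset.sum_le_sum_of_subset fun i hi => ?_
      rw [Finset.mem_Icc] at hi
      rw [Finset.mem_range]
      omega
end
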